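/- arXiv:2410.00235 — 2 statements merged into one kernel-verified Lean document; each statement's English description precedes it below -/
import Mathlib

section
/- Let x be a nilpotent endomorphism of a finite-dimensional vector space V and F a subspace with Im(x) ⊆ F. Set b_j = dim(F + ker(x^j)) for j ≥ 0. Then the Jordan type of x restricted to F is obtained from the Jordan type of x by removing (b_j − b_{j−1}) boxes from the bottom of column j for every j ≥ 1, and the removed boxes form a vertical strip. -/
open Module Submodule LinearMap

noncomputable section

variable {V : Type*} [AddCommGroup V] [Module ℂ V]

/-- Perpendicular of a subspace with respect to a bilinear form. -/
def perp (B : V →ₗ[ℂ] V →ₗ[ℂ] ℂ) (W : Submodule ℂ V) : Submodule ℂ V where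
  carrier := {v | ∀ w ∈ W, B v w = 0}
  add_mem' := by
    intro a b ha hb w hw
    simp [map_add, ha w hw, hb w hw]
  zero_mem' := by intro w hw; simp
  smul_mem' := by
    intro c a ha w hw
    simp [map_smul, ha w hw]

@[simp] lemma mem_perp {B : V →ₗ[ℂ] V →ₗ[ℂ] ℂ} {W : Submodule ℂ V} {v : V} :
    v ∈ perp B W ↔ ∀ w ∈ W, B v w = 0 := Iff.rfl

/-- The subquotient W/U for U ≤ W. -/
abbrev SubQuot (W U : Submodule ℂ V) : Type _ := W ⧸ (U.comap W.subtype)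

/-- The endomorphism induced on the subquotient W/U by x. -/
def subQuotMap (x : V →ₗ[ℂ] V) (W U : Submodule ℂ V)
    (hW : ∀ v ∈ W, x v ∈ W) (hU : ∀ v ∈ U, x v ∈ U) :
    SubQuot W U →ₗ[ℂ] SubQuot W U :=
  Submodule.mapQ _ _ (x.restrict hW) (by
    intro a ha
    simp only [Submodule.mem_comap, LinearMap.restrict_apply, Submodule.coe_subtype] at ha ⊢
    exact hU a.1 ha)

/-- The Zariski topology on a complex vector space. -/
def zariski (M : Type*) [AddCommGroup M] [Module ℂ M] : TopologicalSpace M :=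
  TopologicalSpace.generateFrom
    {U | ∃ f : M → ℂ,
      f ∈ Algebra.adjoin ℂ {g : M → ℂ | ∃ φ : M →ₗ[ℂ] ℂ, g = ⇑φ} ∧ U = {x | f x ≠ 0}}

/-- The Grassmannian of k-dimensional subspaces of M. -/
def Grass (M : Type*) [AddCommGroup M] [Module ℂ M] (k : ℕ) : Type _ :=
  {F : Submodule ℂ M // finrank ℂ F = k}

/-- The Zariski topology on the Grassmannian, coinduced from the space of
linearly independent k-tuples with its Zariski topology. -/
instance grassTopology (M : Type*) [AddCommGroup M] [Module ℂ M] (k : ℕ) :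
    TopologicalSpace (Grass M k) :=
  TopologicalSpace.coinduced
    (fun v : {v : Fin k → M // LinearIndependent ℂ v} =>
      (⟨Submodule.span ℂ (Set.range v.1),
        (finrank_span_eq_card v.2).trans (by simp)⟩ : Grass M k))
    (TopologicalSpace.induced Subtype.val (zariski (Fin k → M)))

end

/-!
The map `x ^ j` sends `ker (x ^ (j + 1))` onto `range (x ^ j) ⊓ ker x` with kernel `ker (x ^ j)`, so
column `j + 1` of `x` has length `dim (range (x ^ j) ⊓ ker x)`; in the same way column `j + 1` of
the restriction of `x` to `F` has length `dim (F.map (x ^ j) ⊓ ker x)`. Since `range x ≤ F`, the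
space for column `j + 1` of `x` is contained in the one for column `j` of the restriction, which is
the vertical strip condition. The numbers of removed boxes come from the formula for the dimension
of `F ⊔ ker (x ^ j)`, because the `j`-th power of the restriction has kernel `F ⊓ ker (x ^ j)`.
-/

section JordanColumns

theorem ker_restrict_pow {R M : Type*} [Semiring R] [AddCommMonoid M] [Module R M]
    {f : Module.End R M} {p : Submodule R M} (h : ∀ v ∈ p, f v ∈ p) (n : ℕ) :
    ker (f.restrict h ^ n) = (ker (f ^ n)).comap p.subtype := by
  rw [Module.End.pow_restrict, ker_restrict]

variable {K V W U : Type*} [DivisionRing K] [AddCommGroup V] [Module K V] [AddCommGroup W]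
  [Module K W] [AddCommGroup U] [Module K U]

theorem finrank_ker_comp (f : V →ₗ[K] W) (g : W →ₗ[K] U) [FiniteDimensional K (ker (g ∘ₗ f))] :
    finrank K (ker (g ∘ₗ f)) = finrank K ↥(range f ⊓ ker g) + finrank K (ker f) := by
  have range_eq : range (f.domRestrict (ker (g ∘ₗ f))) = range f ⊓ ker g := by
    rw [range_domRestrict, ker_comp, Submodule.map_comap_eq]
  have finrank_ker_eq : finrank K (ker (f.domRestrict (ker (g ∘ₗ f)))) = finrank K (ker f) := by
    rw [ker_domRestrict]
    exact (comapSubtypeEquivOfLe (ker_le_ker_comp f g)).finrank_eq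
  rw [← range_eq, ← finrank_ker_eq, finrank_range_add_finrank_ker]

/-- The length of the `j`-th column of the Jordan type of a nilpotent endomorphism `f`; for general
`f`, of the Jordan type of its nilpotent part. Columns are numbered from `1`, and the value at
`j = 0` is `0`. -/
noncomputable def jordanColumn (f : Module.End K V) (j : ℕ) : ℕ :=
  finrank K (ker (f ^ j)) - finrank K (ker (f ^ (j - 1)))

variable {f : Module.End K V} {p : Submodule K V}

theorem jordanColumn_restrict_succ [FiniteDimensional K p] (h : ∀ v ∈ p, f v ∈ p) (n : ℕ) :
    jordanColumn (f.restrict h) (n + 1) = finrank K ↥(p.map (f ^ n) ⊓ ker f) := by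
  rw [jordanColumn, Nat.add_sub_cancel, ker_restrict_pow, ker_restrict_pow, ← ker_domRestrict,
    ← ker_domRestrict, pow_succ', ← range_domRestrict]
  exact Nat.sub_eq_of_eq_add (finrank_ker_comp ((f ^ n).domRestrict p) f)

theorem finrank_sup_ker_pow_add_finrank_ker_restrict_pow [FiniteDimensional K p]
    (h : ∀ v ∈ p, f v ∈ p) (n : ℕ) [FiniteDimensional K (ker (f ^ n))] :
    finrank K ↥(p ⊔ ker (f ^ n)) + finrank K (ker (f.restrict h ^ n)) =
      finrank K p + finrank K (ker (f ^ n)) := by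
  rw [← finrank_sup_add_finrank_inf_eq, ker_restrict_pow, ← finrank_map_subtype_eq,
    map_comap_subtype]

variable [FiniteDimensional K V]

theorem jordanColumn_succ (f : Module.End K V) (n : ℕ) :
    jordanColumn f (n + 1) = finrank K ↥(range (f ^ n) ⊓ ker f) := by
  rw [jordanColumn, Nat.add_sub_cancel, pow_succ', Module.End.mul_eq_comp, finrank_ker_comp,
    Nat.add_sub_cancel]

theorem jordanColumn_succ_le_jordanColumn_restrict (h : ∀ v ∈ p, f v ∈ p) (hf : range f ≤ p)
    {j : ℕ} (hj : 1 ≤ j) : jordanColumn f (j + 1) ≤ jordanColumn (f.restrict h) j := by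
  obtain ⟨n, rfl⟩ := Nat.exists_eq_add_of_le' hj
  have range_pow_le : range (f ^ (n + 1)) ≤ p.map (f ^ n) := by
    rw [pow_succ, Module.End.mul_eq_comp, range_comp]
    exact Submodule.map_mono hf
  rw [jordanColumn_succ, jordanColumn_restrict_succ]
  exact Submodule.finrank_mono (inf_le_inf_right (ker f) range_pow_le)

theorem jordanColumn_restrict_add (h : ∀ v ∈ p, f v ∈ p) (j : ℕ) :
    jordanColumn (f.restrict h) j +
        (finrank K ↥(p ⊔ ker (f ^ j)) - finrank K ↥(p ⊔ ker (f ^ (j - 1)))) =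
      jordanColumn f j := by
  have ker_le : ker (f ^ (j - 1)) ≤ ker (f ^ j) := f.iterateKer.monotone j.pred_le
  have ker_restrict_le : ker (f.restrict h ^ (j - 1)) ≤ ker (f.restrict h ^ j) :=
    (f.restrict h).iterateKer.monotone j.pred_le
  have finrank_sup_le := Submodule.finrank_mono (sup_le_sup_left ker_le p)
  have finrank_ker_restrict_le := Submodule.finrank_mono ker_restrict_le
  have finrank_add := finrank_sup_ker_pow_add_finrank_ker_restrict_pow h j
  have finrank_add_pred := finrank_sup_ker_pow_add_finrank_ker_restrict_pow h (j - 1)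
  unfold jordanColumn
  omega

theorem stmt3_general (hf : range f ≤ p) (b : ℕ → ℕ)
    (hb : ∀ j, b j = finrank K ↥(p ⊔ ker (f ^ j))) (h : ∀ v ∈ p, f v ∈ p) :
    (∀ j, 1 ≤ j → jordanColumn (f.restrict h) j = jordanColumn f j - (b j - b (j - 1))) ∧
      ∀ j, 1 ≤ j → jordanColumn f (j + 1) ≤ jordanColumn (f.restrict h) j := by
  refine ⟨fun j _ ↦ ?_, fun j hj ↦ jordanColumn_succ_le_jordanColumn_restrict h hf hj⟩
  rw [hb, hb]
  exact Nat.eq_sub_of_add_eq (jordanColumn_restrict_add h j)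

end JordanColumns

/-- for a nilpotent x and Im(x) ⊆ F, with b_j = dim(F + ker(x^j)), the Jordan
type of x|_F is obtained from that of x by removing b_j − b_{j−1} boxes from the bottom of
column j, and the removed boxes form a vertical strip. -/
theorem stmt3 (V : Type*) [AddCommGroup V] [Module ℂ V] [FiniteDimensional ℂ V]
    (x : V →ₗ[ℂ] V) (hnil : IsNilpotent x)
    (F : Submodule ℂ V) (hF : LinearMap.range x ≤ F)
    (b : ℕ → ℕ) (hb : ∀ j, b j = finrank ℂ ↥(F ⊔ LinearMap.ker (x ^ j)))
    (hinv : ∀ v ∈ F, x v ∈ F) :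
    (∀ j : ℕ, 1 ≤ j →
      finrank ℂ (LinearMap.ker ((x.restrict hinv) ^ j)) -
          finrank ℂ (LinearMap.ker ((x.restrict hinv) ^ (j - 1))) =
        (finrank ℂ (LinearMap.ker (x ^ j)) - finrank ℂ (LinearMap.ker (x ^ (j - 1)))) -
          (b j - b (j - 1))) ∧
    -- vertical strip: no two removed boxes in the same row
    (∀ j : ℕ, 1 ≤ j →
      finrank ℂ (LinearMap.ker (x ^ (j + 1))) - finrank ℂ (LinearMap.ker (x ^ j)) ≤
        finrank ℂ (LinearMap.ker ((x.restrict hinv) ^ j)) -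
          finrank ℂ (LinearMap.ker ((x.restrict hinv) ^ (j - 1)))) := by
  exact stmt3_general hF b hb hinv
end

section
/- Let V be a 2n-dimensional symplectic space and x a self-adjoint endomorphism with x ≠ 0 and x² = 0, of Jordan type (2^{2n₂} 1^{2n₁}) with 2n₂ + n₁ = n; let F be a k-dimensional isotropic subspace of ker(x), set k₂ = dim(F ∩ Im(x)), k₁ = k − k₂, and 2h = dim((F ∩ Im(x))/(F ∩ x(F^⊥))). Then the Jordan type of the induced map on F^⊥/F is (2^{2n₂−2k₂+2h} 1^{2n₁−2k₁+2k₂−4h}). -/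
open Module Submodule LinearMap

/-!
Let `x` be self-adjoint for a nondegenerate form. Then `ker x = (Im x)^⊥`, so the kernel of `x` on
`F^⊥` is `(F + Im x)^⊥`, and counting dimensions gives `dim x(F^⊥) = dim Im x - dim (F ∩ Im x)`.
The range of the map induced on `F^⊥ / F` is the image of `x(F^⊥)` modulo `F`, of dimension
`dim x(F^⊥) - dim (F ∩ x(F^⊥))`. An endomorphism of square zero is determined up to conjugacy by
its rank and the dimension of the space.
-/

section Subquotient

variable {R M : Type*} [Ring R] [AddCommGroup M] [Module R M]

theorem submoduleOf_le_comap_restrict {f : End R M} {W U : Submodule R M}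
    (hW : ∀ v ∈ W, f v ∈ W) (hU : ∀ v ∈ U, f v ∈ U) :
    U.submoduleOf W ≤ (U.submoduleOf W).comap (f.restrict hW) :=
  fun v hv => hU v hv

/-- The endomorphism that `f` induces on the subquotient `W / (U ∩ W)` for `f`-stable submodules `W`
and `U`. This is `subQuotMap` over an arbitrary ring; over `ℂ` the two are definitionally equal. -/
def subquotientMap (f : End R M) {W U : Submodule R M} (hW : ∀ v ∈ W, f v ∈ W)
    (hU : ∀ v ∈ U, f v ∈ U) : End R (W ⧸ U.submoduleOf W) :=
  (U.submoduleOf W).mapQ (U.submoduleOf W) (f.restrict hW) (submoduleOf_le_comap_restrict hW hU)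

theorem subquotientMap_comp_self_eq_zero {f : End R M} (hf : f ∘ₗ f = 0) {W U : Submodule R M}
    (hW : ∀ v ∈ W, f v ∈ W) (hU : ∀ v ∈ U, f v ∈ U) :
    subquotientMap f hW hU ∘ₗ subquotientMap f hW hU = 0 := by
  have hres : f.restrict hW ∘ₗ f.restrict hW = 0 :=
    LinearMap.ext fun v => Subtype.ext (LinearMap.congr_fun hf v)
  ext v
  exact congrArg (U.submoduleOf W).mkQ (LinearMap.congr_fun hres v)

end Subquotient

section Finrank

variable {K V V₁ : Type*} [DivisionRing K] [AddCommGroup V] [Module K V]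
  [AddCommGroup V₁] [Module K V₁]

theorem finrank_map_add_finrank_inf_ker (f : V →ₗ[K] V₁) (W : Submodule K V)
    [FiniteDimensional K W] :
    finrank K (W.map f) + finrank K ↥(W ⊓ ker f) = finrank K W := by
  have h := finrank_range_add_finrank_ker (f.domRestrict W)
  rwa [range_domRestrict, ker_domRestrict, ← finrank_map_subtype_eq, map_comap_subtype] at h

theorem two_mul_finrank_range_le [FiniteDimensional K V] {f : End K V} (hf : f ∘ₗ f = 0) :
    2 * finrank K (range f) ≤ finrank K V := by
  have hle := finrank_mono (range_le_ker_iff.2 hf)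
  have hrk := finrank_range_add_finrank_ker f
  omega

theorem finrank_quotient_submoduleOf_add_finrank {W U : Submodule K V} [FiniteDimensional K W]
    (h : U ≤ W) : finrank K (W ⧸ U.submoduleOf W) + finrank K U = finrank K W := by
  rw [← (submoduleOfEquivOfLe h).finrank_eq, finrank_quotient_add_finrank]

theorem finrank_range_subquotientMap_add_finrank_inf_map (f : End K V) {W U : Submodule K V}
    [FiniteDimensional K W] (hW : ∀ v ∈ W, f v ∈ W) (hU : ∀ v ∈ U, f v ∈ U) :
    finrank K (range (subquotientMap f hW hU)) + finrank K ↥(U ⊓ W.map f)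
      = finrank K (W.map f) := by
  have hmap : (range (f.restrict hW)).map W.subtype = W.map f := by
    rw [← range_comp, subtype_comp_restrict, range_domRestrict]
  have hinf : (range (f.restrict hW) ⊓ U.submoduleOf W).map W.subtype = U ⊓ W.map f := by
    have hle : W.map f ≤ W := map_le_iff_le_comap.2 hW
    rw [map_inf _ W.injective_subtype, hmap, submoduleOf, map_comap_subtype, ← inf_assoc,
      inf_eq_left.2 hle, inf_comm]
  have h := finrank_map_add_finrank_inf_ker (U.submoduleOf W).mkQ (range (f.restrict hW))
  rwa [ker_mkQ, ← range_mapQ, ← finrank_map_subtype_eq W (_ ⊓ _), hinf,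
    ← finrank_map_subtype_eq W (range (f.restrict hW)), hmap] at h

end Finrank

section Orthogonal

theorem orthogonal_sup {R M : Type*} [CommSemiring R] [AddCommMonoid M] [Module R M]
    (B : LinearMap.BilinForm R M) (N L : Submodule R M) :
    B.orthogonal (N ⊔ L) = B.orthogonal N ⊓ B.orthogonal L := by
  refine le_antisymm
    (le_inf (LinearMap.BilinForm.orthogonal_le le_sup_left)
      (LinearMap.BilinForm.orthogonal_le le_sup_right)) ?_
  rintro v ⟨hN, hL⟩ _ hw
  obtain ⟨a, ha, b, hb, rfl⟩ := mem_sup.1 hw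
  simp [hN a ha, hL b hb]

theorem ker_eq_orthogonal_range {R M M₁ : Type*} [CommSemiring R] [AddCommMonoid M]
    [Module R M] [AddCommMonoid M₁] [Module R M₁]
    {B : LinearMap.BilinForm R M} {B₁ : LinearMap.BilinForm R M₁} (hB : B.SeparatingRight)
    {f : M →ₗ[R] M₁} {g : M₁ →ₗ[R] M} (hfg : IsAdjointPair B B₁ f g) :
    ker g = B₁.orthogonal (range f) := by
  ext v
  calc g v = 0 ↔ ∀ w, B w (g v) = 0 := ⟨fun h w => by rw [h, map_zero], hB _⟩
    _ ↔ ∀ w, B₁ (f w) v = 0 := by simp only [hfg _ v]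
    _ ↔ v ∈ B₁.orthogonal (range f) := by simp

theorem finrank_map_orthogonal_add_finrank_inf_range {K V V₁ : Type*} [Field K]
    [AddCommGroup V] [Module K V] [AddCommGroup V₁] [Module K V₁] [FiniteDimensional K V₁]
    {B : LinearMap.BilinForm K V} {B₁ : LinearMap.BilinForm K V₁}
    (hB : B.SeparatingRight) (hB₁ : B₁.Nondegenerate)
    {f : V →ₗ[K] V₁} {g : V₁ →ₗ[K] V} (hfg : IsAdjointPair B B₁ f g) (F : Submodule K V₁) :
    finrank K ((B₁.orthogonal F).map g) + finrank K ↥(F ⊓ range f) = finrank K (range f) := by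
  have hmap := finrank_map_add_finrank_inf_ker g (B₁.orthogonal F)
  rw [ker_eq_orthogonal_range hB hfg, ← orthogonal_sup, LinearMap.BilinForm.finrank_orthogonal hB₁,
    LinearMap.BilinForm.finrank_orthogonal hB₁] at hmap
  have hsup := finrank_sup_add_finrank_inf_eq F (range f)
  have hF : finrank K F ≤ finrank K ↥(F ⊔ range f) := finrank_mono le_sup_left
  have hV : finrank K ↥(F ⊔ range f) ≤ finrank K V₁ := finrank_le _
  omega

theorem perp_eq_orthogonal {V : Type*} [AddCommGroup V] [Module ℂ V] {B : LinearMap.BilinForm ℂ V}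
    (hB : B.IsRefl) (W : Submodule ℂ V) : perp B W = B.orthogonal W :=
  Submodule.ext fun _ => forall₂_congr fun _ _ => hB.eq_iff

end Orthogonal

/-- Here `x` has Jordan type `(2^r 1^m)` and `e = dim ((F ∩ Im x) / (F ∩ x(F^⊥)))`. -/
theorem stmt11_general {K V : Type*} [Field K] [AddCommGroup V] [Module K V]
    [FiniteDimensional K V] {B : LinearMap.BilinForm K V} (hB : B.Nondegenerate)
    {x : End K V} (hsa : B.IsSelfAdjoint x) (hx2 : x ∘ₗ x = 0)
    {r m : ℕ} (hdim : finrank K V = 2 * r + m) (hrank : finrank K (range x) = r)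
    {F W : Submodule K V} (hW : W = B.orthogonal F) (hiso : F ≤ W)
    (hxW : ∀ v ∈ W, x v ∈ W) (hxF : ∀ v ∈ F, x v ∈ F)
    {k₁ k₂ e : ℕ} (hF : finrank K F = k₁ + k₂) (hk₂ : finrank K ↥(F ⊓ range x) = k₂)
    (he : finrank K ↥(F ⊓ W.map x) + e = k₂) :
    ∃ A C : ℕ,
      A + 2 * k₂ = r + e ∧
      C + 2 * k₁ + 2 * e = m + 2 * k₂ ∧
      subquotientMap x hxW hxF ∘ₗ subquotientMap x hxW hxF = 0 ∧
      finrank K (range (subquotientMap x hxW hxF)) = A ∧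
      finrank K (W ⧸ F.submoduleOf W) = 2 * A + C := by
  have hsq := subquotientMap_comp_self_eq_zero hx2 hxW hxF
  obtain ⟨C, hC⟩ := Nat.exists_eq_add_of_le (two_mul_finrank_range_le hsq)
  have hxFperp : finrank K (W.map x) + finrank K ↥(F ⊓ range x) = finrank K (range x) :=
    hW ▸ finrank_map_orthogonal_add_finrank_inf_range hB.2 hB hsa F
  have hinduced := finrank_range_subquotientMap_add_finrank_inf_map x hxW hxF
  have hsubquot := finrank_quotient_submoduleOf_add_finrank hiso
  have hFperp : finrank K W = finrank K V - finrank K F :=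
    hW ▸ LinearMap.BilinForm.finrank_orthogonal hB F
  have hFV := finrank_le F
  exact ⟨_, C, by omega, by omega, hsq, rfl, hC⟩

/-- for self-adjoint x ≠ 0 with x² = 0 of Jordan type (2^{2n₂} 1^{2n₁}) on a
2n-dimensional symplectic space, and F a k-dimensional isotropic subspace of ker x with
k₂ = dim(F ∩ Im x), k₁ = k − k₂ and 2h = dim((F ∩ Im x)/(F ∩ x(F^⊥))), the Jordan type of
the induced map on F^⊥/F is (2^{2n₂−2k₂+2h} 1^{2n₁−2k₁+2k₂−4h}). Since the induced map
also squares to zero, its Jordan type is (2^A 1^C) iff its rank is A and 2A + C is the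
dimension of F^⊥/F. -/
theorem stmt11 (V : Type*) [AddCommGroup V] [Module ℂ V] [FiniteDimensional ℂ V]
    (B : V →ₗ[ℂ] V →ₗ[ℂ] ℂ) (hskew : ∀ v w : V, B w v = - B v w)
    (hnondeg : ∀ v : V, (∀ w : V, B v w = 0) → v = 0)
    (x : V →ₗ[ℂ] V) (hsa : ∀ v w : V, B (x v) w = B v (x w))
    (hx2 : x ∘ₗ x = 0) (hx0 : x ≠ 0)
    (n n₁ n₂ : ℕ) (hdim : finrank ℂ V = 2 * n) (hn : n = 2 * n₂ + n₁)
    (hrank : finrank ℂ ↥(LinearMap.range x) = 2 * n₂)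
    (F : Submodule ℂ V) (k k₁ k₂ h : ℕ)
    (hFker : F ≤ LinearMap.ker x) (hiso : F ≤ perp B F) (hkF : finrank ℂ F = k)
    (hk₂ : finrank ℂ ↥(F ⊓ LinearMap.range x) = k₂) (hk₁ : k₁ + k₂ = k)
    (hh : finrank ℂ ↥(F ⊓ (perp B F).map x) + 2 * h = k₂) :
    ∀ (hFp : ∀ v ∈ perp B F, x v ∈ perp B F) (hFi : ∀ v ∈ F, x v ∈ F),
      ∃ A C : ℕ,
        A + 2 * k₂ = 2 * n₂ + 2 * h ∧
        C + 2 * k₁ + 4 * h = 2 * n₁ + 2 * k₂ ∧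
        subQuotMap x (perp B F) F hFp hFi ∘ₗ subQuotMap x (perp B F) F hFp hFi = 0 ∧
        finrank ℂ ↥(LinearMap.range (subQuotMap x (perp B F) F hFp hFi)) = A ∧
        finrank ℂ (SubQuot (perp B F) F) = 2 * A + C := by
  intro hFp hFi
  have hrefl : B.IsRefl := fun v w hvw => by rw [hskew, hvw, neg_zero]
  obtain ⟨A, C, hA, hC, hJordan⟩ := stmt11_general (m := 2 * n₁) (e := 2 * h)
    (hrefl.nondegenerate_iff_separatingLeft.2 hnondeg) hsa hx2 (by omega) hrank
    (perp_eq_orthogonal hrefl F) hiso hFp hFi (hkF.trans hk₁.symm) hk₂ hh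
  exact ⟨A, C, hA, by omega, hJordan⟩
end
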